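/- arXiv:1810.04845 — 3 statements merged into one kernel-verified Lean document; each statement's English description precedes it below -/
import Mathlib

section
/- Let T and A be compact linear operators from a reflexive real Banach space X to a real Banach space Y. Suppose M_T = D ∪ (−D) where D is a nonempty connected subset of the unit sphere of X. If T ⊥_B A, then there exists x ∈ M_T with Tx ⊥_B Ax. -/
/-!
Fix `u` and `v`. Convexity of `l ↦ ‖u + l • v‖` shows that the norm does not drop below `‖u‖` along
at least one of the two rays from `u` in the directions `v` and `-v`; Birkhoff–James orthogonality
says that it drops along neither. So `M_T` is covered by the closed sets of those `x` for which
`‖T x + l • A x‖` stays at least `‖T x‖` on the ray `l ≥ 0`, respectively on `l ≤ 0`, and a point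
common to both is what we want.

Both sets meet `M_T`. The unit ball `B` of `X` is weakly compact and compact operators are
weak-to-norm continuous on it, so for every `l > 0` some `x ∈ B` has
`‖T x + l • A x‖ = ‖T + l • A‖ ≥ ‖T‖`. By convexity the nonempty closed sets
`{x ∈ B | ‖T‖ ≤ ‖T x + l • A x‖}` shrink as `l` decreases to `0`, so they have a common point, and
letting `l → 0` puts it in `M_T` if `T ≠ 0`. The same applies to `-A`. Both sets are invariant under
`x ↦ -x`, hence both meet `D`, and connectedness of `D` makes them meet each other.
-/

open Filter Metric Set Topology

section HalfOrthogonality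

variable {E : Type*} [SeminormedAddCommGroup E] [NormedSpace ℝ E] {u v : E}

/-- Birkhoff–James orthogonality `u ⊥_B v` in a real normed space. -/
def BirkhoffOrthogonal (u v : E) : Prop :=
  ∀ l : ℝ, ‖u‖ ≤ ‖u + l • v‖

/-- One-sided Birkhoff–James orthogonality, often written `v ∈ u⁺`: the norm does not drop below
`‖u‖` along the ray from `u` in the direction `v`. -/
def HalfBirkhoffOrthogonal (u v : E) : Prop :=
  ∀ l : ℝ, 0 ≤ l → ‖u‖ ≤ ‖u + l • v‖

theorem birkhoffOrthogonal_iff_half :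
    BirkhoffOrthogonal u v ↔ HalfBirkhoffOrthogonal u v ∧ HalfBirkhoffOrthogonal u (-v) := by
  refine ⟨fun h => ⟨fun l _ => h l, fun l _ => ?_⟩, fun ⟨hpos, hneg⟩ l => ?_⟩
  · simpa only [smul_neg, neg_smul] using h (-l)
  · rcases le_total 0 l with hl | hl
    · exact hpos l hl
    · simpa only [smul_neg, neg_smul, neg_neg] using hneg (-l) (neg_nonneg.2 hl)

theorem HalfBirkhoffOrthogonal.neg_neg (h : HalfBirkhoffOrthogonal u v) :
    HalfBirkhoffOrthogonal (-u) (-v) := fun l hl => by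
  simpa only [smul_neg, ← neg_add, norm_neg] using h l hl

theorem convexOn_norm_add_smul (u v : E) : ConvexOn ℝ univ fun l : ℝ => ‖u + l • v‖ := by
  simpa only [Function.comp_def, AffineMap.lineMap_apply_module', add_sub_cancel_left,
    preimage_univ, add_comm] using
    (convexOn_univ_norm (E := E)).comp_affineMap (AffineMap.lineMap u (u + v))

theorem norm_add_smul_mono {a b : ℝ} (ha : 0 < a) (hab : a ≤ b) (h : ‖u‖ ≤ ‖u + a • v‖) :
    ‖u + a • v‖ ≤ ‖u + b • v‖ := by
  rcases hab.eq_or_lt with rfl | hab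
  · exact le_rfl
  · refine (convexOn_norm_add_smul u v).le_right_of_left_le (mem_univ 0) (mem_univ b) ?_ ?_
    · rw [openSegment_eq_Ioo (ha.trans hab)]
      exact ⟨ha, hab⟩
    · simpa only [zero_smul, add_zero] using h

theorem halfBirkhoffOrthogonal_or_neg (u v : E) :
    HalfBirkhoffOrthogonal u v ∨ HalfBirkhoffOrthogonal u (-v) := by
  by_contra! h
  simp only [HalfBirkhoffOrthogonal, not_forall, not_le] at h
  obtain ⟨⟨a, ha, hua⟩, b, hb, hub⟩ := h
  rw [smul_neg, ← neg_smul] at hub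
  have hmax := (convexOn_norm_add_smul u v).le_max_of_mem_Icc (mem_univ (-b)) (mem_univ a)
    (z := 0) ⟨neg_nonpos.2 hb, ha⟩
  simp only [zero_smul, add_zero] at hmax
  exact hmax.not_gt (max_lt hub hua)

theorem isClosed_setOfPred_halfBirkhoffOrthogonal {α : Type*} [TopologicalSpace α] {f g : α → E}
    (hf : Continuous f) (hg : Continuous g) :
    IsClosed {x | HalfBirkhoffOrthogonal (f x) (g x)} := by
  simp only [HalfBirkhoffOrthogonal, ofPred_forall]
  exact isClosed_iInter fun l => isClosed_iInter fun _ => isClosed_le (by fun_prop) (by fun_prop)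

theorem exists_norm_eq_and_halfBirkhoffOrthogonal {α : Type*} [TopologicalSpace α] [CompactSpace α]
    {f g : α → E} {c : ℝ} (hf : Continuous f) (hg : Continuous g) (hfc : ∀ x, ‖f x‖ ≤ c)
    (hfg : ∀ l : ℝ, 0 < l → ∃ x, c ≤ ‖f x + l • g x‖) :
    ∃ x, ‖f x‖ = c ∧ HalfBirkhoffOrthogonal (f x) (g x) := by
  let S : Ioi (0 : ℝ) → Set α := fun l => {x | c ≤ ‖f x + (l : ℝ) • g x‖}
  have hS_closed (l) : IsClosed (S l) := isClosed_le (by fun_prop) (by fun_prop)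
  have hS_mono : Monotone S := fun l _ hlm x hx =>
    hx.trans (norm_add_smul_mono l.2 hlm ((hfc x).trans hx))
  obtain ⟨x, hx⟩ := IsCompact.nonempty_iInter_of_directed_nonempty_isCompact_isClosed S
    hS_mono.directed_ge (fun l => hfg l l.2) (fun l => (hS_closed l).isCompact) hS_closed
  have hray : ∀ l : ℝ, 0 < l → c ≤ ‖f x + l • g x‖ := fun l hl => mem_iInter.1 hx ⟨l, hl⟩
  have hlim : Tendsto (fun l : ℝ => ‖f x + l • g x‖) (𝓝[>] 0) (𝓝 ‖f x‖) := by
    have hcont : Continuous fun l : ℝ => ‖f x + l • g x‖ := by fun_prop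
    simpa only [zero_smul, add_zero] using (hcont.tendsto 0).mono_left nhdsWithin_le_nhds
  have hfx : ‖f x‖ = c :=
    (hfc x).antisymm (ge_of_tendsto hlim (eventually_nhdsWithin_of_forall hray))
  refine ⟨x, hfx, fun l hl => ?_⟩
  rcases hl.eq_or_lt with rfl | hl
  · rw [zero_smul, add_zero]
  · exact hfx.trans_le (hray l hl)

end HalfOrthogonality

theorem continuousOn_of_comp_of_mapsTo_isCompact {α β γ : Type*} [TopologicalSpace α]
    [TopologicalSpace β] [TopologicalSpace γ] [T2Space γ] {f : α → β} {g : β → γ} {s : Set α}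
    {K : Set β} (hK : IsCompact K) (hg : ContinuousOn g K) (hinj : InjOn g K) (hf : MapsTo f s K)
    (hgf : ContinuousOn (g ∘ f) s) : ContinuousOn f s := by
  have : CompactSpace K := isCompact_iff_compactSpace.1 hK
  have hemb : IsEmbedding (K.domRestrict g) :=
    (hg.domRestrict.isClosedEmbedding hinj.injective).isEmbedding
  have hres : Continuous (hf.restrict f s K) := hemb.continuous_iff.2 hgf.domRestrict
  exact continuousOn_iff_continuous_domRestrict.2 (continuous_subtype_val.comp hres)

section WeakTopology

variable {𝕜 X Y : Type*} [RCLike 𝕜] [NormedAddCommGroup X] [NormedSpace 𝕜 X]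
  [NormedAddCommGroup Y] [NormedSpace 𝕜 Y]

theorem isCompact_toWeakSpace_image_closedBall
    (hrefl : Function.Surjective (NormedSpace.inclusionInDoubleDual 𝕜 X)) (r : ℝ) :
    IsCompact (toWeakSpace 𝕜 X '' closedBall 0 r) := by
  let : NormedSpace ℝ X := NormedSpace.restrictScalars ℝ 𝕜 X
  have hclosure :
      toWeakSpace 𝕜 X '' closedBall 0 r = closure (toWeakSpace 𝕜 X '' closedBall 0 r) := by
    rw [← (convex_closedBall (0 : X) r).toWeakSpace_closure 𝕜, isClosed_closedBall.closure_eq]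
  rw [hclosure]
  refine NormedSpace.isCompact_closure_of_isBounded 𝕜 X _ ?_ fun Φ _ => ?_
  · rw [preimage_image_eq _ (toWeakSpace 𝕜 X).injective]
    exact isBounded_closedBall
  · obtain ⟨x, hx⟩ := hrefl (WeakDual.toStrongDual Φ)
    exact ⟨toWeakSpace 𝕜 X x, hx⟩

theorem continuousOn_toWeakSpace_symm_of_isCompactOperator {S : X →L[𝕜] Y}
    (hS : IsCompactOperator S) {s : Set X} (hs : Bornology.IsBounded s) :
    ContinuousOn (fun x => S ((toWeakSpace 𝕜 X).symm x)) (toWeakSpace 𝕜 X '' s) := by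
  obtain ⟨K, hK, hSK⟩ :=
    IsCompactOperator.image_subset_compact_of_bounded (f := (S : X →ₗ[𝕜] Y)) hS hs
  refine continuousOn_of_comp_of_mapsTo_isCompact (g := toWeakSpace 𝕜 Y) hK
    (toWeakSpaceCLM 𝕜 Y).continuous.continuousOn (toWeakSpace 𝕜 Y).injective.injOn ?_
    (WeakSpace.map S).continuous.continuousOn
  rintro _ ⟨x, hx, rfl⟩
  exact hSK ⟨x, hx, rfl⟩

theorem exists_norm_le_one_norm_apply_eq_opNorm
    (hrefl : Function.Surjective (NormedSpace.inclusionInDoubleDual 𝕜 X)) {S : X →L[𝕜] Y}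
    (hS : IsCompactOperator S) : ∃ x, ‖x‖ ≤ 1 ∧ ‖S x‖ = ‖S‖ := by
  obtain ⟨_, ⟨x, hx, rfl⟩, hmax⟩ :=
    (isCompact_toWeakSpace_image_closedBall hrefl 1).exists_isMaxOn
      ((nonempty_closedBall.2 zero_le_one).image _)
      (continuousOn_toWeakSpace_symm_of_isCompactOperator hS isBounded_closedBall).norm
  have hx1 : ‖x‖ ≤ 1 := mem_closedBall_zero_iff.1 hx
  refine ⟨x, hx1, (S.unit_le_opNorm x hx1).antisymm ?_⟩
  let : NormedSpace ℝ X := NormedSpace.restrictScalars ℝ 𝕜 X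
  exact S.opNorm_le_of_unit_norm (norm_nonneg _) fun y hy =>
    hmax ⟨y, mem_closedBall_zero_iff.2 hy.le, rfl⟩

end WeakTopology

section NormAttainment

variable {X Y : Type*} [NormedAddCommGroup X] [NormedSpace ℝ X]
  [NormedAddCommGroup Y] [NormedSpace ℝ Y] {T A : X →L[ℝ] Y}

/-- The norm attainment set `M_T`: the unit vectors at which `T` attains its operator norm. -/
def normAttainmentSet (T : X →L[ℝ] Y) : Set X :=
  {x | ‖x‖ = 1 ∧ ‖T x‖ = ‖T‖}

theorem mem_normAttainmentSet_of_norm_le_one (hT : T ≠ 0) {x : X} (hx : ‖x‖ ≤ 1)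
    (hTx : ‖T x‖ = ‖T‖) : x ∈ normAttainmentSet T := by
  refine ⟨hx.antisymm (le_of_mul_le_mul_left ?_ (norm_pos_iff.2 hT)), hTx⟩
  calc ‖T‖ * 1 = ‖T x‖ := by rw [mul_one, hTx]
    _ ≤ ‖T‖ * ‖x‖ := T.le_opNorm x

theorem exists_mem_normAttainmentSet_halfBirkhoffOrthogonal
    (hrefl : Function.Surjective (NormedSpace.inclusionInDoubleDual ℝ X)) (hT0 : T ≠ 0)
    (hT : IsCompactOperator T) (hA : IsCompactOperator A) (hTA : HalfBirkhoffOrthogonal T A) :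
    ∃ x ∈ normAttainmentSet T, HalfBirkhoffOrthogonal (T x) (A x) := by
  let B : Set (WeakSpace ℝ X) := toWeakSpace ℝ X '' closedBall 0 1
  have : CompactSpace B :=
    isCompact_iff_compactSpace.1 (isCompact_toWeakSpace_image_closedBall hrefl 1)
  have hcont {S : X →L[ℝ] Y} (hS : IsCompactOperator S) :
      Continuous fun x : B => S ((toWeakSpace ℝ X).symm x) :=
    (continuousOn_toWeakSpace_symm_of_isCompactOperator hS isBounded_closedBall).domRestrict
  have hle : ∀ x : B, ‖T ((toWeakSpace ℝ X).symm x)‖ ≤ ‖T‖ := by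
    rintro ⟨_, x, hx, rfl⟩
    exact T.unit_le_opNorm x (mem_closedBall_zero_iff.1 hx)
  have hray (l : ℝ) (hl : 0 < l) : ∃ x : B,
      ‖T‖ ≤ ‖T ((toWeakSpace ℝ X).symm x) + l • A ((toWeakSpace ℝ X).symm x)‖ := by
    obtain ⟨x, hx, hattain⟩ :=
      exists_norm_le_one_norm_apply_eq_opNorm hrefl (S := T + l • A) (hT.add (hA.smul l))
    exact ⟨⟨_, x, mem_closedBall_zero_iff.2 hx, rfl⟩, (hTA l hl.le).trans_eq hattain.symm⟩
  obtain ⟨⟨_, x, hx, rfl⟩, hTx, hTAx⟩ :=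
    exists_norm_eq_and_halfBirkhoffOrthogonal (hcont hT) (hcont hA) hle hray
  exact ⟨x, mem_normAttainmentSet_of_norm_le_one hT0 (mem_closedBall_zero_iff.1 hx) hTx, hTAx⟩

theorem birkhoff_ortho_of_symmetric_connected_norm_attainment_general
    (hrefl : Function.Surjective (NormedSpace.inclusionInDoubleDual ℝ X))
    (hT : IsCompactOperator T) (hA : IsCompactOperator A) {D : Set X} (hDconn : IsConnected D)
    (hMT : normAttainmentSet T = D ∪ -D) (horth : BirkhoffOrthogonal T A) :
    ∃ x ∈ normAttainmentSet T, BirkhoffOrthogonal (T x) (A x) := by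
  rcases eq_or_ne T 0 with rfl | hT0
  · obtain ⟨d, hd⟩ := hDconn.nonempty
    exact ⟨d, hMT ▸ Or.inl hd, fun l => by simp⟩
  have hmeets {B : X →L[ℝ] Y} (hB : IsCompactOperator B) (hTB : HalfBirkhoffOrthogonal T B) :
      (D ∩ {x | HalfBirkhoffOrthogonal (T x) (B x)}).Nonempty := by
    obtain ⟨x, hxM, hx⟩ :=
      exists_mem_normAttainmentSet_halfBirkhoffOrthogonal hrefl hT0 hT hB hTB
    rcases hMT ▸ hxM with hxD | hxD
    · exact ⟨x, hxD, hx⟩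
    · exact ⟨-x, hxD, by simpa only [mem_ofPred_eq, map_neg] using hx.neg_neg⟩
  obtain ⟨hpos, hneg⟩ := birkhoffOrthogonal_iff_half.1 horth
  obtain ⟨x, hxD, hx⟩ := isPreconnected_closed_iff.1 hDconn.isPreconnected _ _
    (isClosed_setOfPred_halfBirkhoffOrthogonal T.continuous A.continuous)
    (isClosed_setOfPred_halfBirkhoffOrthogonal T.continuous (-A).continuous)
    (fun x _ => halfBirkhoffOrthogonal_or_neg (T x) (A x)) (hmeets hA hpos) (hmeets hA.neg hneg)
  exact ⟨x, hMT ▸ Or.inl hxD, birkhoffOrthogonal_iff_half.2 hx⟩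

end NormAttainment

theorem birkhoff_ortho_of_symmetric_connected_norm_attainment
    {X Y : Type*} [NormedAddCommGroup X] [NormedSpace ℝ X] [CompleteSpace X]
    [NormedAddCommGroup Y] [NormedSpace ℝ Y] [CompleteSpace Y]
    (hrefl : Function.Surjective (NormedSpace.inclusionInDoubleDual ℝ X))
    (T A : X →L[ℝ] Y) (hT : IsCompactOperator T) (hA : IsCompactOperator A)
    (D : Set X) (hD : D.Nonempty) (hDconn : IsConnected D)
    (hDsub : D ⊆ {x : X | ‖x‖ = 1})
    (hMT : {x : X | ‖x‖ = 1 ∧ ‖T x‖ = ‖T‖} = D ∪ (-D))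
    (horth : ∀ l : ℝ, ‖T + l • A‖ ≥ ‖T‖) :
    ∃ x ∈ {x : X | ‖x‖ = 1 ∧ ‖T x‖ = ‖T‖}, ∀ l : ℝ, ‖T x + l • A x‖ ≥ ‖T x‖ :=
  birkhoff_ortho_of_symmetric_connected_norm_attainment_general hrefl hT hA hDconn hMT horth
end

section
/- Let H be an infinite-dimensional real Hilbert space and T, A : H → H compact linear operators. Then T is Birkhoff-James orthogonal to A (‖T + λA‖ ≥ ‖T‖ for all real λ) if and only if there exists a unit vector x with ‖Tx‖ = ‖T‖ and ⟨Tx, Ax⟩ = 0. -/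
open RealInnerProductSpace

/-!
The vectors at which `T` attains its norm form a subspace `M`, by the parallelogram law. The same
law makes every sequence in the unit ball with `‖T uₙ‖ → ‖T‖` and `T uₙ` convergent a Cauchy
sequence, so compactness of `T` yields maximizers as limits. Expanding `‖(T + l A) x‖²` at almost
maximizing `x` and letting `l ↓ 0` gives a nonzero `x ∈ M` with `⟪T x, A x⟫ ≥ 0`; replacing `A` by
`-A` gives a nonzero `y ∈ M` with `⟪T y, A y⟫ ≤ 0`. A real quadratic form that changes sign on `M`
has a nontrivial zero there.
-/

section BirkhoffOrthogonality

/-- Birkhoff-James orthogonality of `x` to `y`: moving from `x` along the line spanned by `y` never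
decreases the norm. The relation depends on the scalars `𝕜` and is not symmetric. -/
def IsBirkhoffOrthogonal (𝕜 : Type*) {E : Type*} [Norm E] [Add E] [SMul 𝕜 E] (x y : E) : Prop :=
  ∀ l : 𝕜, ‖x‖ ≤ ‖x + l • y‖

variable {𝕜 E F : Type*}

theorem IsBirkhoffOrthogonal.neg_right [Ring 𝕜] [SeminormedAddCommGroup E] [Module 𝕜 E] {x y : E}
    (h : IsBirkhoffOrthogonal 𝕜 x y) : IsBirkhoffOrthogonal 𝕜 x (-y) := fun l ↦ by
  simpa only [smul_neg, neg_smul] using h (-l)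

theorem isBirkhoffOrthogonal_of_inner_eq_zero [RCLike 𝕜] [SeminormedAddCommGroup E]
    [InnerProductSpace 𝕜 E] {x y : E} (h : inner 𝕜 x y = 0) : IsBirkhoffOrthogonal 𝕜 x y := by
  intro l
  have pythagoras : ‖x + l • y‖ * ‖x + l • y‖ = ‖x‖ * ‖x‖ + ‖l • y‖ * ‖l • y‖ :=
    norm_add_sq_eq_norm_sq_add_norm_sq_of_inner_eq_zero x (l • y)
      (by rw [inner_smul_right, h, mul_zero])
  refine nonneg_le_nonneg_of_sq_le_sq (norm_nonneg _) ?_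
  rw [pythagoras]
  exact le_add_of_nonneg_right (mul_self_nonneg _)

theorem isBirkhoffOrthogonal_of_apply [RCLike 𝕜] [SeminormedAddCommGroup E] [NormedSpace 𝕜 E]
    [SeminormedAddCommGroup F] [NormedSpace 𝕜 F] {T A : E →L[𝕜] F} {x : E} (hx : ‖x‖ ≤ 1)
    (hTx : ‖T x‖ = ‖T‖) (h : IsBirkhoffOrthogonal 𝕜 (T x) (A x)) : IsBirkhoffOrthogonal 𝕜 T A :=
  fun l ↦ calc
    ‖T‖ = ‖T x‖ := hTx.symm
    _ ≤ ‖(T + l • A) x‖ := h l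
    _ ≤ ‖T + l • A‖ := (T + l • A).unit_le_opNorm x hx

end BirkhoffOrthogonality

section NormAttainment

open Filter Topology

variable {𝕜 E F : Type*} [RCLike 𝕜] [NormedAddCommGroup E] [InnerProductSpace 𝕜 E]

/-- The vectors at which `T` attains its norm, scaled to `‖T x‖ = ‖T‖ * ‖x‖` so that they form a
subspace when both spaces are inner product spaces. Its unit sphere is the norm attainment set
`M_T` of the literature. -/
def normAttainingSubmodule [NormedAddCommGroup F] [InnerProductSpace 𝕜 F] (T : E →L[𝕜] F) :
    Submodule 𝕜 E where
  carrier := {x | ‖T x‖ = ‖T‖ * ‖x‖}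
  zero_mem' := by simp
  smul_mem' c x hx := by
    rw [Set.mem_ofPred_eq] at hx ⊢
    rw [map_smul, norm_smul, norm_smul, hx, mul_left_comm]
  add_mem' {x y} hx hy := by
    rw [Set.mem_ofPred_eq] at hx hy ⊢
    have domain_law := parallelogram_law_with_norm 𝕜 x y
    have image_law := parallelogram_law_with_norm 𝕜 (T x) (T y)
    rw [← map_add, ← map_sub, hx, hy] at image_law
    have sum_le := mul_self_le_mul_self (norm_nonneg _) (T.le_opNorm (x + y))
    have diff_le := mul_self_le_mul_self (norm_nonneg _) (T.le_opNorm (x - y))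
    refine (mul_self_inj (norm_nonneg _) (by positivity)).1 (sum_le.antisymm ?_)
    linear_combination diff_le - image_law + ‖T‖ ^ 2 * domain_law

theorem mem_normAttainingSubmodule [NormedAddCommGroup F] [InnerProductSpace 𝕜 F]
    {T : E →L[𝕜] F} {x : E} : x ∈ normAttainingSubmodule T ↔ ‖T x‖ = ‖T‖ * ‖x‖ := Iff.rfl

variable [NormedAddCommGroup F] [NormedSpace 𝕜 F] {T : E →L[𝕜] F}

theorem sq_opNorm_mul_norm_sub_le (T : E →L[𝕜] F) {x y : E} (hx : ‖x‖ ≤ 1) (hy : ‖y‖ ≤ 1) :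
    (‖T‖ * ‖x - y‖) ^ 2 ≤ 4 * ‖T‖ ^ 2 - ‖T x + T y‖ ^ 2 := by
  have parallelogram : ‖x - y‖ ^ 2 = 2 * (‖x‖ ^ 2 + ‖y‖ ^ 2) - ‖x + y‖ ^ 2 := by
    linear_combination parallelogram_law_with_norm 𝕜 x y
  have image_le : ‖T x + T y‖ ^ 2 ≤ (‖T‖ * ‖x + y‖) ^ 2 := by
    rw [← map_add]
    gcongr
    exact T.le_opNorm (x + y)
  calc (‖T‖ * ‖x - y‖) ^ 2
      = ‖T‖ ^ 2 * (2 * (‖x‖ ^ 2 + ‖y‖ ^ 2)) - (‖T‖ * ‖x + y‖) ^ 2 := by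
        rw [mul_pow, parallelogram]; ring
    _ ≤ ‖T‖ ^ 2 * (2 * (1 ^ 2 + 1 ^ 2)) - ‖T x + T y‖ ^ 2 := by gcongr
    _ = 4 * ‖T‖ ^ 2 - ‖T x + T y‖ ^ 2 := by ring

theorem cauchySeq_of_tendsto_apply_of_norm_eq (hT : T ≠ 0) {u : ℕ → E} (hu : ∀ n, ‖u n‖ ≤ 1) {y : F}
    (hy : Tendsto (fun n ↦ T (u n)) atTop (𝓝 y)) (hyT : ‖y‖ = ‖T‖) : CauchySeq u := by
  rw [cauchySeq_iff_tendsto_dist_atTop_0]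
  have sum_lim : Tendsto (fun p : ℕ × ℕ ↦ T (u p.1) + T (u p.2)) atTop (𝓝 (y + y)) := by
    rw [← prod_atTop_atTop_eq]
    exact (hy.comp tendsto_fst).add (hy.comp tendsto_snd)
  have bound : Tendsto (fun p : ℕ × ℕ ↦ 4 * ‖T‖ ^ 2 - ‖T (u p.1) + T (u p.2)‖ ^ 2) atTop (𝓝 0) := by
    have limit_eq : 4 * ‖T‖ ^ 2 - ‖y + y‖ ^ 2 = 0 := by
      rw [← two_smul 𝕜 y, norm_smul, RCLike.norm_two, hyT]
      ring
    exact limit_eq ▸ (sum_lim.norm.pow 2).const_sub (4 * ‖T‖ ^ 2)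
  have scaled_sq : Tendsto (fun p : ℕ × ℕ ↦ (‖T‖ * ‖u p.1 - u p.2‖) ^ 2) atTop (𝓝 0) :=
    squeeze_zero (fun _ ↦ sq_nonneg _)
      (fun p ↦ sq_opNorm_mul_norm_sub_le T (hu p.1) (hu p.2)) bound
  have scaled : Tendsto (fun p : ℕ × ℕ ↦ ‖T‖ * ‖u p.1 - u p.2‖) atTop (𝓝 0) := by
    simpa [Real.sqrt_sq, mul_nonneg] using scaled_sq.sqrt
  simpa [dist_eq_norm, hT] using scaled.const_mul ‖T‖⁻¹

theorem exists_subseq_tendsto_of_tendsto_norm_apply [CompleteSpace E] (hT : IsCompactOperator T)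
    (hT0 : T ≠ 0) {u : ℕ → E} (hu : ∀ n, ‖u n‖ ≤ 1)
    (hTu : Tendsto (fun n ↦ ‖T (u n)‖) atTop (𝓝 ‖T‖)) :
    ∃ (x : E) (φ : ℕ → ℕ), StrictMono φ ∧ Tendsto (u ∘ φ) atTop (𝓝 x) := by
  obtain ⟨C, hC, hTC⟩ := hT.image_closedBall_subset_compact (f := T.toLinearMap) 1
  obtain ⟨y, -, φ, hφ, hy⟩ := hC.tendsto_subseq (x := fun n ↦ T (u n))
    fun n ↦ hTC ⟨u n, mem_closedBall_zero_iff.2 (hu n), rfl⟩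
  have hyT : ‖y‖ = ‖T‖ := tendsto_nhds_unique hy.norm (hTu.comp hφ.tendsto_atTop)
  obtain ⟨x, hx⟩ := cauchySeq_tendsto_of_complete
    (cauchySeq_of_tendsto_apply_of_norm_eq hT0 (fun n ↦ hu (φ n)) hy hyT)
  exact ⟨x, φ, hφ, hx⟩

end NormAttainment

section QuadraticForm

theorem exists_ne_zero_quadraticForm_eq_zero {V : Type*} [AddCommGroup V] [Module ℝ V]
    (q : QuadraticForm ℝ V) {x y : V} (hx : x ≠ 0) (hy : y ≠ 0) (hqx : 0 ≤ q x) (hqy : q y ≤ 0) :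
    ∃ z ≠ 0, q z = 0 := by
  have expand (s : ℝ) : q ((1 - s) • x + s • y) =
      (1 - s) ^ 2 * q x + s ^ 2 * q y + (1 - s) * s * QuadraticMap.polar q x y := by
    simp only [QuadraticMap.map_add, QuadraticMap.map_smul, QuadraticMap.polar_smul_left,
      QuadraticMap.polar_smul_right, smul_eq_mul]
    ring
  have continuous_q : Continuous fun s : ℝ ↦ q ((1 - s) • x + s • y) := by
    simp only [expand]
    fun_prop
  obtain ⟨s, -, hs⟩ := intermediate_value_Icc' (zero_le_one' ℝ) continuous_q.continuousOn
    (show (0 : ℝ) ∈ Set.Icc _ _ by simpa using ⟨hqy, hqx⟩)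
  by_cases hz : (1 - s) • x + s • y = 0
  · -- Then `x` and `y` are proportional, so `q x` and `q y` have the same sign and both vanish.
    have hs0 : s ≠ 0 := by
      rintro rfl
      exact hx (by simpa using hz)
    have scaled_eq : s ^ 2 * q y = (1 - s) ^ 2 * q x := by
      have := congrArg q (eq_neg_of_add_eq_zero_right hz)
      rw [QuadraticMap.map_neg, QuadraticMap.map_smul, QuadraticMap.map_smul] at this
      simpa only [smul_eq_mul, ← sq] using this
    have scaled_nonneg : 0 ≤ s ^ 2 * q y := by rw [scaled_eq]; positivity
    exact ⟨y, hy, hqy.antisymm (nonneg_of_mul_nonneg_right scaled_nonneg (by positivity))⟩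
  · exact ⟨_, hz, hs⟩

end QuadraticForm

section Perturbation

open Filter Topology

variable {E F : Type*} [NormedAddCommGroup E]

theorem exists_norm_le_one_lt_sq_norm_apply [NormedSpace ℝ E]
    [SeminormedAddCommGroup F] [NormedSpace ℝ F] (f : E →L[ℝ] F) {r : ℝ} (hr : r < ‖f‖ ^ 2) :
    ∃ x : E, ‖x‖ ≤ 1 ∧ r < ‖f x‖ ^ 2 := by
  rcases lt_or_ge r 0 with hr0 | hr0
  · exact ⟨0, by simp, by simpa using hr0⟩
  · obtain ⟨x, hx, hfx⟩ := f.exists_lt_apply_of_lt_opNorm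
      ((Real.sqrt_lt hr0 (norm_nonneg f)).2 hr)
    exact ⟨x, hx.le, Real.lt_sq_of_sqrt_lt hfx⟩

theorem exists_lt_sq_norm_apply_add_inner [NormedSpace ℝ E]
    [SeminormedAddCommGroup F] [InnerProductSpace ℝ F] {T A : E →L[ℝ] F} {l : ℝ} (hl : l ≠ 0)
    (h : ‖T‖ ≤ ‖T + l • A‖) :
    ∃ x : E, ‖x‖ ≤ 1 ∧ ‖T‖ ^ 2 - l ^ 2 * (1 + ‖A‖ ^ 2) < ‖T x‖ ^ 2 + 2 * l * ⟪T x, A x⟫ := by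
  have slack : ‖T‖ ^ 2 - l ^ 2 < ‖T + l • A‖ ^ 2 :=
    (sub_lt_self _ (by positivity)).trans_le (by gcongr)
  obtain ⟨x, hx, hlt⟩ := exists_norm_le_one_lt_sq_norm_apply _ slack
  have expand : ‖(T + l • A) x‖ ^ 2 = ‖T x‖ ^ 2 + 2 * l * ⟪T x, A x⟫ + l ^ 2 * ‖A x‖ ^ 2 := by
    rw [add_apply, smul_apply, norm_add_sq_real,
      real_inner_smul_right, norm_smul, mul_pow, Real.norm_eq_abs, sq_abs, mul_assoc]
  have error_le : l ^ 2 * ‖A x‖ ^ 2 ≤ l ^ 2 * ‖A‖ ^ 2 := by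
    gcongr
    exact A.unit_le_opNorm x hx
  exact ⟨x, hx, by linarith⟩

theorem exists_seq_tendsto_norm_apply_inner_ge [NormedSpace ℝ E]
    [SeminormedAddCommGroup F] [InnerProductSpace ℝ F] {T A : E →L[ℝ] F}
    (h : ∀ l : ℝ, 0 < l → ‖T‖ ≤ ‖T + l • A‖) :
    ∃ (u : ℕ → E) (ε : ℕ → ℝ), (∀ n, ‖u n‖ ≤ 1) ∧
      Tendsto (fun n ↦ ‖T (u n)‖) atTop (𝓝 ‖T‖) ∧
      Tendsto ε atTop (𝓝 0) ∧ ∀ n, ε n ≤ ⟪T (u n), A (u n)⟫ := by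
  let l : ℕ → ℝ := fun n ↦ 1 / ((n : ℝ) + 1)
  have l_pos (n : ℕ) : 0 < l n := Nat.one_div_pos_of_nat
  have l_lim : Tendsto l atTop (𝓝 0) := tendsto_one_div_add_atTop_nhds_zero_nat
  choose u hu key using fun n ↦ exists_lt_sq_norm_apply_add_inner (l_pos n).ne' (h (l n) (l_pos n))
  have norm_apply_le (n : ℕ) : ‖T (u n)‖ ≤ ‖T‖ := T.unit_le_opNorm _ (hu n)
  refine ⟨u, fun n ↦ -(l n * ((1 + ‖A‖ ^ 2) / 2)), hu, ?_, ?_, fun n ↦ ?_⟩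
  · have inner_le (n : ℕ) : ⟪T (u n), A (u n)⟫ ≤ ‖T‖ * ‖A‖ :=
      (real_inner_le_norm _ _).trans <|
        mul_le_mul (norm_apply_le n) (A.unit_le_opNorm _ (hu n)) (norm_nonneg _) (norm_nonneg _)
    have lower (n : ℕ) :
        ‖T‖ ^ 2 - l n ^ 2 * (1 + ‖A‖ ^ 2) - 2 * l n * (‖T‖ * ‖A‖) ≤ ‖T (u n)‖ ^ 2 := by
      have := mul_le_mul_of_nonneg_left (inner_le n) (mul_pos two_pos (l_pos n)).le
      linarith [key n]
    have lower_lim : Tendsto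
        (fun n ↦ ‖T‖ ^ 2 - l n ^ 2 * (1 + ‖A‖ ^ 2) - 2 * l n * (‖T‖ * ‖A‖)) atTop
        (𝓝 (‖T‖ ^ 2)) := by
      simpa using ((l_lim.pow 2).mul_const (1 + ‖A‖ ^ 2)).const_sub (‖T‖ ^ 2) |>.sub
        ((l_lim.const_mul 2).mul_const (‖T‖ * ‖A‖))
    have sq_lim : Tendsto (fun n ↦ ‖T (u n)‖ ^ 2) atTop (𝓝 (‖T‖ ^ 2)) :=
      tendsto_of_tendsto_of_tendsto_of_le_of_le lower_lim tendsto_const_nhds lower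
        fun n ↦ by dsimp only; gcongr; exact norm_apply_le n
    simpa using sq_lim.sqrt
  · simpa using (l_lim.mul_const ((1 + ‖A‖ ^ 2) / 2)).neg
  · have sq_le : ‖T (u n)‖ ^ 2 ≤ ‖T‖ ^ 2 := by gcongr; exact norm_apply_le n
    refine le_of_mul_le_mul_left ?_ (l_pos n)
    linarith [key n]

variable [InnerProductSpace ℝ E] [CompleteSpace E] [Nontrivial E] [NormedAddCommGroup F]
  [InnerProductSpace ℝ F] {T A : E →L[ℝ] F}

theorem exists_mem_normAttainingSubmodule_inner_nonneg (hT : IsCompactOperator T)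
    (h : ∀ l : ℝ, 0 < l → ‖T‖ ≤ ‖T + l • A‖) :
    ∃ x ∈ normAttainingSubmodule T, x ≠ 0 ∧ 0 ≤ ⟪T x, A x⟫ := by
  rcases eq_or_ne T 0 with rfl | hT0
  · obtain ⟨x, hx⟩ := exists_ne (0 : E)
    exact ⟨x, by simp [mem_normAttainingSubmodule], hx, by simp⟩
  obtain ⟨u, ε, hu, norm_lim, ε_lim, ε_le⟩ := exists_seq_tendsto_norm_apply_inner_ge h
  obtain ⟨x, φ, hφ, hx⟩ := exists_subseq_tendsto_of_tendsto_norm_apply hT hT0 hu norm_lim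
  have Tx_lim : Tendsto (fun n ↦ T (u (φ n))) atTop (𝓝 (T x)) := (T.continuous.tendsto x).comp hx
  have Ax_lim : Tendsto (fun n ↦ A (u (φ n))) atTop (𝓝 (A x)) := (A.continuous.tendsto x).comp hx
  have norm_le : ‖x‖ ≤ 1 := le_of_tendsto' hx.norm fun n ↦ hu (φ n)
  have norm_Tx : ‖T x‖ = ‖T‖ :=
    tendsto_nhds_unique Tx_lim.norm (norm_lim.comp hφ.tendsto_atTop)
  refine ⟨x, (T.le_opNorm x).antisymm ?_, ?_, ?_⟩
  · rw [norm_Tx]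
    exact mul_le_of_le_one_right (norm_nonneg T) norm_le
  · rintro rfl
    exact hT0 (by simpa using norm_Tx.symm)
  · exact le_of_tendsto_of_tendsto' (ε_lim.comp hφ.tendsto_atTop) (Tx_lim.inner Ax_lim)
      fun n ↦ ε_le (φ n)

theorem exists_mem_normAttainingSubmodule_inner_eq_zero (hT : IsCompactOperator T)
    (h : IsBirkhoffOrthogonal ℝ T A) :
    ∃ x ∈ normAttainingSubmodule T, x ≠ 0 ∧ ⟪T x, A x⟫ = 0 := by
  obtain ⟨x, hxM, hx, hTAx⟩ :=
    exists_mem_normAttainingSubmodule_inner_nonneg hT fun l _ ↦ h l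
  obtain ⟨y, hyM, hy, hTAy⟩ :=
    exists_mem_normAttainingSubmodule_inner_nonneg hT fun l _ ↦ h.neg_right l
  let M := normAttainingSubmodule T
  let q : QuadraticForm ℝ M := LinearMap.BilinMap.toQuadraticMap
    ((innerₗ F).compl₁₂ (T.toLinearMap ∘ₗ M.subtype) (A.toLinearMap ∘ₗ M.subtype))
  obtain ⟨z, hz, hqz⟩ := exists_ne_zero_quadraticForm_eq_zero q (x := ⟨x, hxM⟩) (y := ⟨y, hyM⟩)
    (by simpa using hx) (by simpa using hy) hTAx (by simpa [q] using hTAy)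
  exact ⟨z, z.2, by simpa using hz, hqz⟩

theorem compact_birkhoff_iff_inner_ortho_general (hT : IsCompactOperator T) :
    IsBirkhoffOrthogonal ℝ T A ↔ ∃ x : E, ‖x‖ = 1 ∧ ‖T x‖ = ‖T‖ ∧ ⟪T x, A x⟫ = 0 := by
  constructor
  · intro h
    obtain ⟨x, hxM, hx, hTAx⟩ := exists_mem_normAttainingSubmodule_inner_eq_zero hT h
    have norm_unit : ‖‖x‖⁻¹ • x‖ = 1 := norm_smul_inv_norm hx
    have unit_mem : ‖x‖⁻¹ • x ∈ normAttainingSubmodule T := Submodule.smul_mem _ _ hxM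
    refine ⟨‖x‖⁻¹ • x, norm_unit, ?_, ?_⟩
    · rw [mem_normAttainingSubmodule.1 unit_mem, norm_unit, mul_one]
    · rw [map_smul, map_smul, real_inner_smul_left, real_inner_smul_right, hTAx, mul_zero, mul_zero]
  · rintro ⟨x, hx, hTx, hTAx⟩
    exact isBirkhoffOrthogonal_of_apply hx.le hTx (isBirkhoffOrthogonal_of_inner_eq_zero hTAx)

end Perturbation

theorem compact_birkhoff_iff_inner_ortho
    {H : Type*} [NormedAddCommGroup H] [InnerProductSpace ℝ H] [CompleteSpace H]
    (hinf : ¬ FiniteDimensional ℝ H)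
    (T A : H →L[ℝ] H) (hT : IsCompactOperator T) (hA : IsCompactOperator A) :
    (∀ l : ℝ, ‖T + l • A‖ ≥ ‖T‖) ↔
      ∃ x : H, ‖x‖ = 1 ∧ ‖T x‖ = ‖T‖ ∧ ⟪T x, A x⟫ = 0 := by
  have : Nontrivial H := not_subsingleton_iff_nontrivial.1 fun _ ↦ hinf inferInstance
  exact compact_birkhoff_iff_inner_ortho_general hT
end

section
/- Let H₁, H₂ be real Hilbert spaces, Z a finite-dimensional subspace of the space of compact linear operators from H₁ to H₂, and T a compact operator not in Z. Then there exists A₀ ∈ Z such that dist(T, Z) = sup{ ⟨Tx, y⟩ : ‖x‖ = 1, ‖y‖ = 1, ⟨A₀x, y⟩ = 0 }, and A₀ is a best approximation to T in Z. -/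
open RealInnerProductSpace

/-!
Regard `(x, y) ↦ ⟪A x, y⟫` and `(x, y) ↦ ⟪T x, y⟫ - c / 2 * (‖x‖ ^ 2 + ‖y‖ ^ 2)` as quadratic forms
on `H₁ × H₂`. If `⟪T x, y⟫ ≤ c` for all unit vectors with `⟪A x, y⟫ = 0`, the second form is
nonpositive on the zeros of the first, which is indefinite unless `A = 0`. By the S-lemma the
second form is then at most `t` times the first for some real `t`, that is, `‖T - t • A‖ ≤ c`. Hence
the supremum of `⟪T x, y⟫` over those vectors is the distance from `T` to the line `ℝ ∙ A`. When `A`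
is a best approximation to `T` in `Z`, this distance is the distance from `T` to `Z`.
-/

section SLemma

lemma exists_neg_pos_quadratic_roots {a c : ℝ} (b : ℝ) (ha : 0 < a) (hc : c < 0) :
    ∃ s t : ℝ, s < 0 ∧ 0 < t ∧ a + s * b + s ^ 2 * c = 0 ∧ a + t * b + t ^ 2 * c = 0 ∧
      s * t * c = a := by
  set w := √(b ^ 2 - 4 * a * c)
  have hac : a * c < 0 := mul_neg_of_pos_of_neg ha hc
  have hw_sq : w ^ 2 = b ^ 2 - 4 * a * c := Real.sq_sqrt (by nlinarith)
  obtain ⟨hb_lt, hlt_b⟩ : -w < b ∧ b < w :=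
    abs_lt.mp (Real.lt_sqrt_of_sq_lt (by rw [sq_abs]; linarith))
  refine ⟨(-b + w) / (2 * c), (-b - w) / (2 * c), div_neg_of_pos_of_neg (by linarith) (by linarith),
    div_pos_of_neg_of_neg (by linarith) (by linarith), ?_, ?_, ?_⟩ <;>
  · field_simp
    grind

lemma quadraticForm_map_add_smul {R M : Type*} [CommRing R] [AddCommGroup M] [Module R M]
    (Q : QuadraticForm R M) (z w : M) (s : R) :
    Q (z + s • w) = Q z + s * QuadraticMap.polar Q z w + s ^ 2 * Q w := by
  rw [QuadraticMap.map_add Q, QuadraticMap.map_smul, QuadraticMap.polar_smul_right]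
  simp only [smul_eq_mul]
  ring

variable {V : Type*} [AddCommGroup V] [Module ℝ V] {Q B : QuadraticForm ℝ V}

lemma div_le_div_of_nonpos_on_zeros (hQ : ∀ z, B z = 0 → Q z ≤ 0) {z w : V}
    (hz : 0 < B z) (hw : B w < 0) : Q z / B z ≤ Q w / B w := by
  obtain ⟨s, t, hs, ht, hs_root, ht_root, hst⟩ :=
    exists_neg_pos_quadratic_roots (QuadraticMap.polar B z w) hz hw
  have hQs := hQ (z + s • w) (by rwa [quadraticForm_map_add_smul])
  have hQt := hQ (z + t • w) (by rwa [quadraticForm_map_add_smul])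
  rw [quadraticForm_map_add_smul] at hQs hQt
  have hcomb : (t - s) * (Q z - s * t * Q w) ≤ 0 := by
    -- the weights `t` and `-s` cancel the polar terms
    have hQs_mul := mul_nonpos_of_nonneg_of_nonpos ht.le hQs
    have hQt_mul := mul_nonneg_of_nonpos_of_nonpos hs.le hQt
    linear_combination hQs_mul + hQt_mul
  have hle : Q z ≤ s * t * Q w :=
    sub_nonpos.mp (nonpos_of_mul_nonpos_right hcomb (by linarith))
  calc Q z / B z ≤ s * t * Q w / B z := div_le_div_of_nonneg_right hle hz.le
    _ = Q w / B w := by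
      have hst_ne : s * t ≠ 0 := (mul_neg_of_neg_of_pos hs ht).ne
      rw [← hst, mul_div_mul_left _ _ hst_ne]

theorem exists_forall_le_mul_of_nonpos_on_zeros (hQ : ∀ z, B z = 0 → Q z ≤ 0)
    (hpos : ∃ z, 0 < B z) (hneg : ∃ z, B z < 0) : ∃ t : ℝ, ∀ z, Q z ≤ t * B z := by
  obtain ⟨t, ht_upper, ht_lower⟩ :=
    exists_between_of_forall_le (s := (fun z ↦ Q z / B z) '' {z | 0 < B z})
      (t := (fun z ↦ Q z / B z) '' {z | B z < 0})
      (Set.Nonempty.image _ hpos) (Set.Nonempty.image _ hneg) (by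
        rintro _ ⟨z, hz, rfl⟩ _ ⟨w, hw, rfl⟩
        exact div_le_div_of_nonpos_on_zeros hQ hz hw)
  refine ⟨t, fun z ↦ ?_⟩
  rcases lt_trichotomy (B z) 0 with hz | hz | hz
  · exact (le_div_iff_of_neg hz).mp (ht_lower ⟨z, hz, rfl⟩)
  · simpa [hz] using hQ z hz
  · exact (div_le_iff₀ hz).mp (ht_upper ⟨z, hz, rfl⟩)

end SLemma

section OperatorDuality

variable {E F : Type*} [NormedAddCommGroup E] [InnerProductSpace ℝ E]
  [NormedAddCommGroup F] [InnerProductSpace ℝ F]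

/-- The quadratic form `(x, y) ↦ ⟪A x, y⟫` on `E × F`, which turns statements about pairs with
`⟪A x, y⟫ = 0` into statements about the zeros of a quadratic form. -/
noncomputable def pairingForm (A : E →L[ℝ] F) : QuadraticForm ℝ (E × F) :=
  LinearMap.BilinMap.toQuadraticMap
    ((innerₗ F).compl₁₂ (A.toLinearMap ∘ₗ LinearMap.fst ℝ E F) (LinearMap.snd ℝ E F))

lemma pairingForm_apply (A : E →L[ℝ] F) (z : E × F) : pairingForm A z = ⟪A z.1, z.2⟫ := rfl

lemma exists_pairingForm_pos {A : E →L[ℝ] F} (hA : A ≠ 0) : ∃ z, 0 < pairingForm A z := by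
  obtain ⟨x, hx⟩ := DFunLike.ne_iff.mp hA
  exact ⟨(x, A x), real_inner_self_pos.mpr hx⟩

lemma exists_pairingForm_neg {A : E →L[ℝ] F} (hA : A ≠ 0) : ∃ z, pairingForm A z < 0 := by
  obtain ⟨z, hz⟩ := exists_pairingForm_pos hA
  refine ⟨(z.1, -z.2), ?_⟩
  rwa [pairingForm_apply, inner_neg_right, neg_lt_zero]

variable (E F) in
/-- The quadratic form `(x, y) ↦ ‖x‖ ^ 2 + ‖y‖ ^ 2` on `E × F`. Since `E × F` carries the sup norm,
this is not the square of its norm. -/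
noncomputable def sumNormSqForm : QuadraticForm ℝ (E × F) :=
  (LinearMap.BilinMap.toQuadraticMap (innerₗ E)).prod
    (LinearMap.BilinMap.toQuadraticMap (innerₗ F))

lemma sumNormSqForm_apply (z : E × F) : sumNormSqForm E F z = ‖z.1‖ ^ 2 + ‖z.2‖ ^ 2 := by
  simp [sumNormSqForm]

variable {T A : E →L[ℝ] F} {c : ℝ}

lemma inner_le_mul_norm_mul_norm_of_unit
    (h : ∀ x y, ‖x‖ = 1 → ‖y‖ = 1 → ⟪A x, y⟫ = 0 → ⟪T x, y⟫ ≤ c)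
    {x : E} {y : F} (hxy : ⟪A x, y⟫ = 0) : ⟪T x, y⟫ ≤ c * (‖x‖ * ‖y‖) := by
  rcases eq_or_ne x 0 with rfl | hx
  · simp
  rcases eq_or_ne y 0 with rfl | hy
  · simp
  have hunit := h (‖x‖⁻¹ • x) (‖y‖⁻¹ • y) (norm_smul_inv_norm hx) (norm_smul_inv_norm hy)
    (by simp [inner_smul_left, inner_smul_right, hxy])
  have hscale : ⟪T (‖x‖⁻¹ • x), ‖y‖⁻¹ • y⟫ = ⟪T x, y⟫ / (‖x‖ * ‖y‖) := by
    rw [map_smul, real_inner_smul_left, real_inner_smul_right]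
    field_simp
  rwa [hscale, div_le_iff₀ (by positivity)] at hunit

theorem exists_norm_sub_smul_le (hc : 0 ≤ c)
    (h : ∀ x y, ‖x‖ = 1 → ‖y‖ = 1 → ⟪A x, y⟫ = 0 → ⟪T x, y⟫ ≤ c) :
    ∃ t : ℝ, ‖T - t • A‖ ≤ c := by
  rcases eq_or_ne A 0 with rfl | hA
  · exact ⟨0, ContinuousLinearMap.opNorm_le_of_re_inner_le hc fun x y hx hy ↦ by
      simpa using h x y hx hy (by simp)⟩
  have hzeros (z : E × F) (hz : pairingForm A z = 0) :
      (pairingForm T - (c / 2) • sumNormSqForm E F) z ≤ 0 := by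
    have hamgm := mul_le_mul_of_nonneg_left (two_mul_le_add_sq ‖z.1‖ ‖z.2‖) hc
    have hinner : ⟪T z.1, z.2⟫ ≤ c * (‖z.1‖ * ‖z.2‖) := inner_le_mul_norm_mul_norm_of_unit h hz
    simp only [sub_apply, smul_apply, pairingForm_apply, sumNormSqForm_apply, smul_eq_mul]
    linarith
  obtain ⟨t, ht⟩ := exists_forall_le_mul_of_nonpos_on_zeros hzeros
    (exists_pairingForm_pos hA) (exists_pairingForm_neg hA)
  refine ⟨t, ContinuousLinearMap.opNorm_le_of_re_inner_le hc fun x y hx hy ↦ ?_⟩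
  have hxy := ht (x, y)
  simp only [sub_apply, smul_apply, pairingForm_apply, sumNormSqForm_apply, smul_eq_mul, hx,
    hy] at hxy
  simp only [sub_apply, smul_apply, inner_sub_left, real_inner_smul_left, RCLike.re_to_real]
  linarith

theorem isLUB_inner_infDist_span_singleton (hT : T ∉ Submodule.span ℝ {A}) :
    IsLUB {r : ℝ | ∃ (x : E) (y : F), ‖x‖ = 1 ∧ ‖y‖ = 1 ∧ ⟪A x, y⟫ = 0 ∧ r = ⟪T x, y⟫}
      (Metric.infDist T (Submodule.span ℝ {A})) := by
  have hne : (Submodule.span ℝ {A} : Set (E →L[ℝ] F)).Nonempty := ⟨0, Submodule.zero_mem _⟩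
  constructor
  · rintro _ ⟨x, y, hx, hy, hxy, rfl⟩
    refine (Metric.le_infDist hne).mpr fun B hB ↦ ?_
    obtain ⟨t, rfl⟩ := Submodule.mem_span_singleton.mp hB
    calc ⟪T x, y⟫ = ⟪(T - t • A) x, y⟫ := by simp [inner_sub_left, real_inner_smul_left, hxy]
      _ ≤ ‖(T - t • A) x‖ * ‖y‖ := real_inner_le_norm _ _
      _ ≤ ‖T - t • A‖ := by
        rw [hy, mul_one]
        exact (T - t • A).unit_le_opNorm x hx.le
      _ = dist T (t • A) := (dist_eq_norm _ _).symm
  · intro c hc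
    obtain ⟨t, ht⟩ := exists_norm_sub_smul_le (T := T) (A := A) (le_max_right c 0)
      fun x y hx hy hxy ↦ (hc ⟨x, y, hx, hy, hxy, rfl⟩).trans (le_max_left c 0)
    have hpos : 0 < Metric.infDist T (Submodule.span ℝ {A}) :=
      ((Submodule.closed_of_finiteDimensional _).notMem_iff_infDist_pos hne).mp hT
    have htA : t • A ∈ Submodule.span ℝ {A} :=
      Submodule.smul_mem _ t (Submodule.mem_span_singleton_self A)
    have hle : Metric.infDist T (Submodule.span ℝ {A}) ≤ max c 0 :=
      (Metric.infDist_le_dist_of_mem htA).trans ((dist_eq_norm _ _).trans_le ht)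
    exact (le_max_iff.mp hle).resolve_right hpos.not_ge

end OperatorDuality

section BestApproximation

lemma exists_infDist_eq_dist_of_properSpace {X : Type*} [PseudoMetricSpace X] {s : Set X}
    [ProperSpace s] (hs : s.Nonempty) (x : X) : ∃ y ∈ s, Metric.infDist x s = dist x y := by
  obtain ⟨z, hz⟩ := hs
  have hcompact : IsCompact (s ∩ Metric.closedBall x (dist z x)) := by
    rw [← Subtype.image_preimage_coe]
    refine IsCompact.image (Metric.isCompact_of_isClosed_isBounded
      (Metric.isClosed_closedBall.preimage continuous_subtype_val) ?_) continuous_subtype_val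
    rw [← Bornology.isBounded_image_subtype_val, Subtype.image_preimage_coe]
    exact Metric.isBounded_closedBall.subset Set.inter_subset_right
  obtain ⟨y, hy, hxy⟩ := hcompact.exists_infDist_eq_dist ⟨z, hz, Metric.mem_closedBall.mpr le_rfl⟩ x
  exact ⟨y, hy.1, (Metric.infDist_inter_closedBall_of_mem hz).symm.trans hxy⟩

lemma infDist_eq_sInf_norm_sub {G : Type*} [SeminormedAddCommGroup G] (x : G) (s : Set G) :
    Metric.infDist x s = sInf {r : ℝ | ∃ y ∈ s, r = ‖x - y‖} := by
  rw [Metric.infDist_eq_iInf, iInf]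
  congr 1
  ext r
  simp [dist_eq_norm, eq_comm]

end BestApproximation

theorem best_approximation_in_finite_dim_subspace_general
    {E F : Type*} [NormedAddCommGroup E] [InnerProductSpace ℝ E]
    [NormedAddCommGroup F] [InnerProductSpace ℝ F]
    (Z : Submodule ℝ (E →L[ℝ] F)) [FiniteDimensional ℝ Z] (T : E →L[ℝ] F) (hTZ : T ∉ Z) :
    ∃ A₀ ∈ Z,
      sInf {r : ℝ | ∃ B ∈ Z, r = ‖T - B‖} =
        sSup {r : ℝ | ∃ (x : E) (y : F),
          ‖x‖ = 1 ∧ ‖y‖ = 1 ∧ ⟪A₀ x, y⟫ = 0 ∧ r = ⟪T x, y⟫} ∧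
      ‖T - A₀‖ = sInf {r : ℝ | ∃ B ∈ Z, r = ‖T - B‖} := by
  have : ProperSpace (Z : Set (E →L[ℝ] F)) := FiniteDimensional.proper ℝ Z
  obtain ⟨A, hAZ, hA⟩ := exists_infDist_eq_dist_of_properSpace Z.nonempty T
  have hspan : Submodule.span ℝ {A} ≤ Z := (Submodule.span_singleton_le_iff_mem A Z).mpr hAZ
  have hdist : Metric.infDist T (Submodule.span ℝ {A}) = Metric.infDist T Z :=
    le_antisymm (hA ▸ Metric.infDist_le_dist_of_mem (Submodule.mem_span_singleton_self A))
      (Metric.infDist_le_infDist_of_subset hspan (Submodule.nonempty _))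
  have hlub := isLUB_inner_infDist_span_singleton fun hT ↦ hTZ (hspan hT)
  have hinf : Metric.infDist T Z = sInf {r : ℝ | ∃ B ∈ Z, r = ‖T - B‖} :=
    infDist_eq_sInf_norm_sub T Z
  refine ⟨A, hAZ, ?_, ?_⟩
  · rw [← hinf, ← hdist, hlub.csSup_eq hlub.nonempty]
  · rw [← hinf, hA, dist_eq_norm]

theorem best_approximation_in_finite_dim_subspace
    {H₁ H₂ : Type*} [NormedAddCommGroup H₁] [InnerProductSpace ℝ H₁] [CompleteSpace H₁]
    [NormedAddCommGroup H₂] [InnerProductSpace ℝ H₂] [CompleteSpace H₂]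
    (Z : Submodule ℝ (H₁ →L[ℝ] H₂)) (hZfin : FiniteDimensional ℝ Z)
    (hZcpt : ∀ B ∈ Z, IsCompactOperator B)
    (T : H₁ →L[ℝ] H₂) (hT : IsCompactOperator T) (hTZ : T ∉ Z) :
    ∃ A₀ ∈ Z,
      sInf {r : ℝ | ∃ B ∈ Z, r = ‖T - B‖} =
        sSup {r : ℝ | ∃ (x : H₁) (y : H₂),
          ‖x‖ = 1 ∧ ‖y‖ = 1 ∧ ⟪A₀ x, y⟫ = 0 ∧ r = ⟪T x, y⟫} ∧
      ‖T - A₀‖ = sInf {r : ℝ | ∃ B ∈ Z, r = ‖T - B‖} :=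
  best_approximation_in_finite_dim_subspace_general Z T hTZ
end
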